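/- For any positive integers g and k, there exists a finite simple graph G of girth at least g whose chromatic number is at least k. -/

import Mathlib

/-!
Sample `D * n` unordered pairs of `n` vertices uniformly and independently, and join the pairs
obtained. For fixed `D` the expected number of labelled `m`-cycles is at most `(2 * D) ^ m`,
whatever `n` is. A set of `n / (2 * k)` vertices contains a proportion of all pairs that is bounded
below in terms of `k` only, so for `D` large it is independent with probability at most `4⁻¹ ^ n`,
which beats the union bound over the `2 ^ n` sets. Hence for `n` large some sample has fewer than
`n / 2` short cycles and no independent set of size `n / (2 * k)`. Deleting a vertex from each short
cycle leaves more than `n / 2` vertices, and as colour classes are independent, more than `k`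
colours are needed.
-/

namespace ErdosGirth

open Finset SimpleGraph
open scoped BigOperators

section Averaging

variable {α β ι κ : Type*} [Fintype α]

lemma expect_card_filter (s : Finset β) (r : α → β → Prop) [∀ a b, Decidable (r a b)] :
    𝔼 a, (#{b ∈ s | r a b} : ℚ≥0) = ∑ b ∈ s, dens {a | r a b} := by
  simp only [card_filter, Nat.cast_sum, expect_sum_comm, dens_eq_card_div_card,
    Fintype.expect_eq_sum_div_card, Nat.cast_ite, Nat.cast_one, Nat.cast_zero]

variable [Fintype ι] [DecidableEq ι]

lemma dens_forall_mem (s : ι → Finset α) [DecidablePred fun f : ι → α ↦ ∀ i, f i ∈ s i] :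
    dens {f : ι → α | ∀ i, f i ∈ s i} = ∏ i, (s i).dens := by
  have hs : ({f : ι → α | ∀ i, f i ∈ s i} : Finset (ι → α)) = Fintype.piFinset s := by ext; simp
  simp [hs, dens_eq_card_div_card, Finset.prod_div_distrib]

lemma dens_comp_eq_le [Fintype κ] (e : κ ↪ ι) (c : κ → α)
    [DecidablePred fun f : ι → α ↦ ∀ k, f (e k) = c k] :
    dens {f : ι → α | ∀ k, f (e k) = c k} ≤ (Fintype.card α : ℚ≥0)⁻¹ ^ Fintype.card κ := by
  classical
  let s (i : ι) : Finset α := {a | ∀ k, e k = i → a = c k}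
  have hs (i : ι) : (s i).dens ≤ if i ∈ univ.map e then (Fintype.card α : ℚ≥0)⁻¹ else 1 := by
    split_ifs with hi
    · obtain ⟨k, -, rfl⟩ := mem_map.1 hi
      calc (s (e k)).dens ≤ ({c k} : Finset α).dens :=
            dens_le_dens fun a ha ↦ by simpa [s] using ha
        _ = (Fintype.card α : ℚ≥0)⁻¹ := dens_singleton _
    · exact dens_le_one
  calc dens {f : ι → α | ∀ k, f (e k) = c k}
      = dens {f : ι → α | ∀ i, f i ∈ s i} := by
        congr 1
        ext f
        simp only [mem_filter_univ, s]
        grind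
    _ = ∏ i, (s i).dens := dens_forall_mem s
    _ ≤ ∏ i, if i ∈ univ.map e then (Fintype.card α : ℚ≥0)⁻¹ else 1 :=
        prod_le_prod' fun i _ ↦ hs i
    _ = (Fintype.card α : ℚ≥0)⁻¹ ^ Fintype.card κ := by
        rw [prod_ite_mem, univ_inter, prod_const, card_map, card_univ]

end Averaging

section SampledGraph

variable {V W ι : Type*}

/-- The graph spanned by a sampled family `f` of unordered pairs: its edges are the values of `f`,
with loops discarded and repetitions merged. -/
def sampledGraph (f : ι → Sym2 V) : SimpleGraph V :=
  fromEdgeSet (Set.range f)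

lemma mem_edgeSet_sampledGraph {f : ι → Sym2 V} {e : Sym2 V} :
    e ∈ (sampledGraph f).edgeSet ↔ (∃ i, f i = e) ∧ ¬e.IsDiag := by
  simp [sampledGraph]

lemma isIndepSet_sampledGraph_iff [DecidableEq V] {f : ι → Sym2 V} {S : Finset V} :
    (sampledGraph f).IsIndepSet S ↔ ∀ i, f i ∉ S.offDiag.image Sym2.mk.uncurry := by
  simp only [IsIndepSet, Set.Pairwise, ← mem_edgeSet, mem_edgeSet_sampledGraph, SetLike.mem_coe,
    Sym2.mk_isDiag_iff, mem_image, mem_offDiag, Prod.exists, Function.uncurry_apply_pair]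
  grind

variable [Fintype V] [Fintype W] [Fintype ι]

open scoped Classical in
lemma labelledCopyCount_sampledGraph_le (H : SimpleGraph W) [Fintype H.edgeSet] (f : ι → Sym2 V) :
    (sampledGraph f).labelledCopyCount H ≤
      #{p : (W → V) × (H.edgeSet ↪ ι) | ∀ e, f (p.2 e) = Sym2.map p.1 e} := by
  have sample (φ : H.Copy (sampledGraph f)) :
      ∃ s : H.edgeSet ↪ ι, ∀ e, f (s e) = Sym2.map φ e := by
    have hedge (e : H.edgeSet) : ∃ i, f i = Sym2.map φ e :=
      (mem_edgeSet_sampledGraph.1 (φ.toHom.mapEdgeSet e).2).1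
    choose s hs using hedge
    refine ⟨⟨s, fun e e' h ↦ Subtype.ext <| Sym2.map.injective φ.injective ?_⟩, hs⟩
    exact (hs e).symm.trans ((congrArg f h).trans (hs e'))
  choose s hs using sample
  rw [labelledCopyCount, ← card_univ]
  refine card_le_card_of_injOn (fun φ ↦ (φ, s φ)) (fun φ _ ↦ by simpa using hs φ) ?_
  exact fun φ _ ψ _ h ↦ DFunLike.coe_injective (congrArg Prod.fst h)

variable [DecidableEq ι]

open scoped Classical in
lemma dens_isIndepSet_sampledGraph [Nonempty V] (S : Finset V) :
    dens {f : ι → Sym2 V | (sampledGraph f).IsIndepSet S} =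
      (1 - ((#S).choose 2 : ℚ≥0) / Fintype.card (Sym2 V)) ^ Fintype.card ι := by
  have : Nonempty (Sym2 V) := ‹Nonempty V›.map .diag
  simp only [isIndepSet_sampledGraph_iff, ← mem_compl]
  rw [dens_forall_mem, prod_const, card_univ, compl_eq_univ_sdiff, dens_sdiff (subset_univ _),
    dens_univ, dens_eq_card_div_card, Sym2.card_image_offDiag]

open scoped Classical in
lemma expect_card_isIndepSet_sampledGraph_le [Nonempty V] (t : ℕ) :
    𝔼 f : ι → Sym2 V, (#{S : Finset V | t ≤ #S ∧ (sampledGraph f).IsIndepSet S} : ℚ≥0) ≤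
      2 ^ Fintype.card V *
        (1 - (t.choose 2 : ℚ≥0) / Fintype.card (Sym2 V)) ^ Fintype.card ι := by
  set q : ℚ≥0 := (1 - (t.choose 2 : ℚ≥0) / Fintype.card (Sym2 V)) ^ Fintype.card ι
  calc 𝔼 f : ι → Sym2 V, (#{S : Finset V | t ≤ #S ∧ (sampledGraph f).IsIndepSet S} : ℚ≥0)
      = ∑ S : Finset V with t ≤ #S, dens {f : ι → Sym2 V | (sampledGraph f).IsIndepSet S} := by
        simp only [← filter_filter]
        exact expect_card_filter {S : Finset V | t ≤ #S}
          fun (f : ι → Sym2 V) S ↦ (sampledGraph f).IsIndepSet S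
    _ ≤ ∑ S : Finset V with t ≤ #S, q := by
        refine sum_le_sum fun S hS ↦ ?_
        rw [dens_isIndepSet_sampledGraph]
        unfold q
        gcongr
        exact (mem_filter.1 hS).2
    _ ≤ ∑ _S : Finset V, q := sum_le_sum_of_subset (filter_subset _ _)
    _ = 2 ^ Fintype.card V * q := by simp

open scoped Classical in
lemma expect_labelledCopyCount_sampledGraph_le (H : SimpleGraph W) [Fintype H.edgeSet] :
    𝔼 f : ι → Sym2 V, ((sampledGraph f).labelledCopyCount H : ℚ≥0) ≤
      (Fintype.card V : ℚ≥0) ^ Fintype.card W *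
        (Fintype.card ι / Fintype.card (Sym2 V) : ℚ≥0) ^ #H.edgeFinset := by
  set N : ℚ≥0 := (Fintype.card (Sym2 V) : ℚ≥0)
  calc 𝔼 f : ι → Sym2 V, ((sampledGraph f).labelledCopyCount H : ℚ≥0)
      ≤ 𝔼 f : ι → Sym2 V,
          (#{p : (W → V) × (H.edgeSet ↪ ι) | ∀ e, f (p.2 e) = Sym2.map p.1 e} : ℚ≥0) :=
        expect_le_expect fun f _ ↦ mod_cast
          (labelledCopyCount_sampledGraph_le H f).trans_eq (by congr)
    _ = ∑ p : (W → V) × (H.edgeSet ↪ ι),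
          dens {f : ι → Sym2 V | ∀ e, f (p.2 e) = Sym2.map p.1 e} := expect_card_filter _ _
    _ ≤ ∑ _p : (W → V) × (H.edgeSet ↪ ι), N⁻¹ ^ #H.edgeFinset := by
        gcongr with p
        simpa only [edgeFinset_card] using dens_comp_eq_le p.2 fun e ↦ Sym2.map p.1 e
    _ = (Fintype.card V : ℚ≥0) ^ Fintype.card W *
          ((Fintype.card ι).descFactorial #H.edgeFinset * N⁻¹ ^ #H.edgeFinset) := by
        rw [sum_const, card_univ, Fintype.card_prod, Fintype.card_fun, Fintype.card_embedding_eq,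
          ← edgeFinset_card, nsmul_eq_mul, Nat.cast_mul, Nat.cast_pow, mul_assoc]
    _ ≤ (Fintype.card V : ℚ≥0) ^ Fintype.card W *
          ((Fintype.card ι : ℚ≥0) ^ #H.edgeFinset * N⁻¹ ^ #H.edgeFinset) := by
        gcongr; exact_mod_cast Nat.descFactorial_le_pow _ _
    _ = _ := by rw [← mul_pow, div_eq_mul_inv]

end SampledGraph

section Deletion

variable {V W : Type*}

lemma exists_free_induce_compl [Fintype V] [Fintype W] [Nonempty W] (G : SimpleGraph V)
    (H : SimpleGraph W) :
    ∃ s : Finset V, #s ≤ G.labelledCopyCount H ∧ H.Free (G.induce (s : Set V)ᶜ) := by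
  classical
  obtain ⟨w⟩ := ‹Nonempty W›
  refine ⟨univ.image fun φ : H.Copy G ↦ φ w, ?_, ?_⟩
  · rw [labelledCopyCount, ← card_univ]
    exact card_image_le
  · rintro ⟨φ⟩
    refine (φ w).2 ?_
    simpa using ⟨(Copy.induce G _).comp φ, rfl⟩

lemma le_egirth_iff_free_cycleGraph {G : SimpleGraph V} {g : ℕ} :
    g ≤ G.egirth ↔ ∀ m ∈ Ico 3 g, (cycleGraph m).Free G := by
  simp only [le_egirth, mem_Ico, Nat.cast_le]
  refine ⟨fun h m hm hG ↦ ?_, fun h a w hw ↦ ?_⟩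
  · obtain ⟨a, w, hw, rfl⟩ := (cycleGraph_isContained_iff hm.1).1 hG
    exact hm.2.not_ge (h a w hw)
  · by_contra! hlt
    exact h _ ⟨hw.three_le_length, hlt⟩
      ((cycleGraph_isContained_iff hw.three_le_length).2 ⟨a, w, hw, rfl⟩)

lemma exists_le_egirth_induce_compl [Fintype V] (G : SimpleGraph V) (g : ℕ) :
    ∃ s : Finset V, #s ≤ ∑ m ∈ Ico 3 g, G.labelledCopyCount (cycleGraph m) ∧
      g ≤ (G.induce (s : Set V)ᶜ).egirth := by
  classical
  have hcut (m : ℕ) (hm : m ∈ Ico 3 g) : ∃ s : Finset V,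
      #s ≤ G.labelledCopyCount (cycleGraph m) ∧
        (cycleGraph m).Free (G.induce (s : Set V)ᶜ) := by
    have : NeZero m := ⟨by grind⟩
    exact exists_free_induce_compl G (cycleGraph m)
  choose! s hcard hfree using hcut
  refine ⟨(Ico 3 g).biUnion s, card_biUnion_le.trans (sum_le_sum hcard),
    le_egirth_iff_free_cycleGraph.2 fun m hm hG ↦ hfree m hm (hG.trans ?_)⟩
  refine ⟨(induceHomOfLE G ?_).toCopy⟩
  exact Set.compl_subset_compl.2 (coe_subset.2 (subset_biUnion_of_mem s hm))

end Deletion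

section Independence

variable {V : Type*}

lemma indepNum_lt_of_forall_not_isIndepSet {G : SimpleGraph V} {t : ℕ}
    (h : ∀ S : Finset V, t ≤ #S → ¬G.IsIndepSet S) : G.indepNum < t := by
  obtain ⟨S, hS⟩ := G.exists_isNIndepSet_indepNum
  by_contra! ht
  exact h S (hS.card_eq ▸ ht) hS.isIndepSet

lemma indepNum_induce_le [Finite V] (G : SimpleGraph V) (s : Set V) :
    (G.induce s).indepNum ≤ G.indepNum := by
  have := Fintype.ofFinite V
  obtain ⟨S, hS⟩ := (G.induce s).exists_isNIndepSet_indepNum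
  have hindep : G.IsIndepSet (S.map (Function.Embedding.subtype _)) := by
    rw [coe_map]
    rintro _ ⟨u, hu, rfl⟩ _ ⟨v, hv, rfl⟩ huv
    exact hS.isIndepSet hu hv (ne_of_apply_ne _ huv)
  calc (G.induce s).indepNum = #(S.map (Function.Embedding.subtype _)) := by
        rw [card_map, hS.card_eq]
    _ ≤ G.indepNum := hindep.card_le_indepNum

lemma card_le_mul_indepNum_of_colorable [Fintype V] {G : SimpleGraph V} {n : ℕ}
    (hG : G.Colorable n) :
    Fintype.card V ≤ n * G.indepNum := by
  obtain ⟨c⟩ := hG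
  by_contra! h
  obtain ⟨i, hi⟩ := Fintype.exists_lt_card_fiber_of_mul_lt_card c (by rwa [Fintype.card_fin])
  have : G.IsIndepSet ({v | c v = i} : Finset V) := by
    simpa [Coloring.colorClass] using c.isIndepSet_colorClass i
  exact hi.not_ge this.card_le_indepNum

lemma lt_chromaticNumber_of_mul_indepNum_lt [Fintype V] {G : SimpleGraph V} {k : ℕ}
    (hG : k * G.indepNum < Fintype.card V) : k < G.chromaticNumber := by
  by_contra! h
  exact hG.not_ge (card_le_mul_indepNum_of_colorable (chromaticNumber_le_iff_colorable.1 h))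

end Independence

section Parameters

lemma card_edgeFinset_cycleGraph {m : ℕ} (hm : 3 ≤ m) :
    #(cycleGraph m).edgeFinset = m := by
  obtain ⟨m, rfl⟩ := Nat.exists_eq_add_of_le' hm
  have hdeg := (cycleGraph (m + 3)).sum_degrees_eq_twice_card_edges
  simp only [cycleGraph_degree_three_le, sum_const, card_univ, Fintype.card_fin,
    smul_eq_mul] at hdeg
  lia

variable {V ι : Type*} [Fintype V] [Fintype ι] {D : ℕ}

lemma expect_labelledCopyCount_cycleGraph_le [DecidableEq ι] {m : ℕ} (hm : 3 ≤ m)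
    (hD : Fintype.card ι = D * Fintype.card V) :
    𝔼 f : ι → Sym2 V, ((sampledGraph f).labelledCopyCount (cycleGraph m) : ℚ≥0) ≤
      (2 * D) ^ m := by
  refine (expect_labelledCopyCount_sampledGraph_le _).trans ?_
  rw [Fintype.card_fin, card_edgeFinset_cycleGraph hm, ← mul_pow, ← mul_div_assoc, hD]
  gcongr
  refine div_le_of_le_mul₀ zero_le zero_le ?_
  have hN : Fintype.card V * (D * Fintype.card V) ≤ 2 * D * Fintype.card (Sym2 V) := by
    have hpairs := Nat.add_one_mul_choose_eq (Fintype.card V) 1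
    rw [Nat.choose_one_right] at hpairs
    rw [Sym2.card]
    nlinarith
  exact_mod_cast hN

open scoped Classical in
lemma expect_card_isIndepSet_sampledGraph_le_two_inv_pow [DecidableEq ι] [Nonempty V] {t : ℕ}
    (hD : Fintype.card ι = D * Fintype.card V)
    (ht : (1 - (t.choose 2 : ℚ≥0) / Fintype.card (Sym2 V)) ^ D ≤ 4⁻¹) :
    𝔼 f : ι → Sym2 V, (#{S : Finset V | t ≤ #S ∧ (sampledGraph f).IsIndepSet S} : ℚ≥0) ≤
      2⁻¹ ^ Fintype.card V := by
  refine (expect_card_isIndepSet_sampledGraph_le t).trans ?_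
  rw [hD, pow_mul, ← mul_pow]
  gcongr
  calc 2 * (1 - (t.choose 2 : ℚ≥0) / Fintype.card (Sym2 V)) ^ D ≤ 2 * 4⁻¹ := by gcongr
    _ = 2⁻¹ := by norm_num

lemma exists_sampledGraph_few_short_cycles_indepNum_lt [Nonempty V] {g t : ℕ}
    (hD : Fintype.card ι = D * Fintype.card V)
    (hV : 2 * ∑ m ∈ Ico 3 g, (2 * D) ^ m < Fintype.card V)
    (ht : (1 - (t.choose 2 : ℚ≥0) / Fintype.card (Sym2 V)) ^ D ≤ 4⁻¹) :
    ∃ f : ι → Sym2 V,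
      2 * ∑ m ∈ Ico 3 g, (sampledGraph f).labelledCopyCount (cycleGraph m) < Fintype.card V ∧
        (sampledGraph f).indepNum < t := by
  classical
  set n := Fintype.card V
  set C := ∑ m ∈ Ico 3 g, (2 * D) ^ m
  let X (f : ι → Sym2 V) : ℕ := ∑ m ∈ Ico 3 g, (sampledGraph f).labelledCopyCount (cycleGraph m)
  let Y (f : ι → Sym2 V) : ℕ := #{S : Finset V | t ≤ #S ∧ (sampledGraph f).IsIndepSet S}
  have : Nonempty (Sym2 V) := ‹Nonempty V›.map .diag
  have hX : 𝔼 f, (X f : ℚ≥0) ≤ C := by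
    simp only [X, C, Nat.cast_sum, expect_sum_comm]
    push_cast
    exact sum_le_sum fun m hm ↦ expect_labelledCopyCount_cycleGraph_le (mem_Ico.1 hm).1 hD
  have hY : 𝔼 f, (Y f : ℚ≥0) ≤ 2⁻¹ ^ n := expect_card_isIndepSet_sampledGraph_le_two_inv_pow hD ht
  -- The weight `n` on `Y` turns a sum below `n` into `Y = 0`.
  have hXY : 𝔼 f, ((2 * X f + n * Y f : ℕ) : ℚ≥0) < n := by
    push_cast
    rw [expect_add_distrib, ← mul_expect, ← mul_expect]
    calc 2 * 𝔼 f, (X f : ℚ≥0) + n * 𝔼 f, (Y f : ℚ≥0) ≤ 2 * C + n * 2⁻¹ ^ n := by gcongr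
      _ < 2 * C + 1 := by
        gcongr
        rw [inv_pow, ← div_eq_mul_inv, div_lt_one (by positivity)]
        exact_mod_cast Nat.lt_two_pow_self
      _ ≤ n := mod_cast hV
  obtain ⟨f, -, hf⟩ := exists_lt_of_expect_lt univ_nonempty hXY
  have hf : 2 * X f + n * Y f < n := mod_cast hf
  have hYf : Y f = 0 := by
    by_contra h
    have := Nat.le_mul_of_pos_right n (Nat.pos_of_ne_zero h)
    lia
  refine ⟨f, by lia, indepNum_lt_of_forall_not_isIndepSet fun S hS hindep ↦ ?_⟩
  exact filter_eq_empty_iff.1 (card_eq_zero.1 hYf) (mem_univ S) ⟨hS, hindep⟩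

lemma choose_two_le_mul_choose_two {k t : ℕ} (hk : 0 < k) (ht : 2 ≤ t) :
    (2 * k * t + 1).choose 2 ≤ 16 * k ^ 2 * t.choose 2 := by
  obtain ⟨t, rfl⟩ := Nat.exists_eq_add_of_le' ht
  have hleft := Nat.add_one_mul_choose_eq (2 * k * (t + 2)) 1
  have hright := Nat.add_one_mul_choose_eq (t + 1) 1
  simp only [Nat.choose_one_right, Nat.reduceAdd] at hleft hright
  have hmul : (2 * k * (t + 2) + 1) * (2 * k * (t + 2)) ≤ 8 * k * (t + 1) * (2 * k * (t + 2)) := by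
    gcongr
    nlinarith
  nlinarith

lemma exists_few_short_cycles_indepNum_lt (g : ℕ) {k : ℕ} (hk : 0 < k) :
    ∃ (n : ℕ) (G : SimpleGraph (Fin n)),
      2 * ∑ m ∈ Ico 3 g, G.labelledCopyCount (cycleGraph m) < n ∧ 2 * k * G.indepNum < n := by
  obtain ⟨D, hD⟩ : ∃ D : ℕ, (1 - 1 / (16 * k ^ 2) : ℚ≥0) ^ D < 4⁻¹ :=
    exists_pow_lt_of_lt_one (by norm_num) (tsub_lt_self one_pos (by positivity))
  let t := ∑ m ∈ Ico 3 g, (2 * D) ^ m + 2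
  let n := 2 * k * t
  have : NeZero n := ⟨by positivity⟩
  have hdens : (1 / (16 * k ^ 2) : ℚ≥0) ≤ t.choose 2 / Fintype.card (Sym2 (Fin n)) := by
    rw [Sym2.card, Fintype.card_fin, div_le_div_iff₀ (by positivity)
        (mod_cast Nat.choose_pos (by lia)), one_mul, mul_comm]
    exact_mod_cast choose_two_le_mul_choose_two hk (show 2 ≤ t by lia)
  have ht : (1 - (t.choose 2 : ℚ≥0) / Fintype.card (Sym2 (Fin n))) ^ D ≤ 4⁻¹ :=
    le_trans (by gcongr) hD.le
  have hn : 2 * ∑ m ∈ Ico 3 g, (2 * D) ^ m < n := by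
    have := Nat.mul_le_mul_right t hk
    lia
  obtain ⟨f, hcycles, hindep⟩ := exists_sampledGraph_few_short_cycles_indepNum_lt
    (V := Fin n) (ι := Fin (D * n)) (g := g) (by simp) (by simpa using hn) ht
  rw [Fintype.card_fin] at hcycles
  exact ⟨n, sampledGraph f, hcycles, Nat.mul_lt_mul_of_pos_left hindep (by positivity)⟩

lemma exists_le_egirth_mul_indepNum_lt_card (g : ℕ) {k : ℕ} (hk : 0 < k) :
    ∃ (V : Type) (_ : Fintype V) (G : SimpleGraph V),
      g ≤ G.egirth ∧ k * G.indepNum < Fintype.card V := by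
  obtain ⟨n, G, hcycles, hindep⟩ := exists_few_short_cycles_indepNum_lt g hk
  obtain ⟨s, hs, hgirth⟩ := exists_le_egirth_induce_compl G g
  refine ⟨_, inferInstance, _, hgirth, ?_⟩
  have hcard : Fintype.card ↥(s : Set (Fin n))ᶜ = n - #s := by
    rw [Fintype.card_of_subtype sᶜ (by simp), card_compl, Fintype.card_fin]
  have := Nat.mul_le_mul_left k (indepNum_induce_le G (s : Set (Fin n))ᶜ)
  lia

end Parameters

end ErdosGirth

/-- For any positive integers `g` and `k`, there exists a finite simple graph of girth at
least `g` whose chromatic number is at least `k`. -/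
theorem exists_girth_large_chromaticNumber (g k : ℕ) (hg : 0 < g) (hk : 0 < k) :
    ∃ (V : Type) (_ : Fintype V) (G : SimpleGraph V),
      (g : ℕ∞) ≤ G.girth ∧ (k : ℕ∞) ≤ G.chromaticNumber := by
  -- Forests have `girth` equal to `0`; three colours rule them out.
  obtain ⟨V, _, G, hgirth, hindep⟩ :=
    ErdosGirth.exists_le_egirth_mul_indepNum_lt_card g (k := max k 2) (by positivity)
  have hchrom : (max k 2 : ℕ) < G.chromaticNumber :=
    ErdosGirth.lt_chromaticNumber_of_mul_indepNum_lt hindep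
  have hcycle : ¬G.IsAcyclic := fun h ↦
    (h.chromaticNumber_le_two.trans (mod_cast le_max_right k 2)).not_gt hchrom
  refine ⟨V, inferInstance, G, ?_, le_trans (mod_cast le_max_left k 2) hchrom.le⟩
  rwa [SimpleGraph.girth, ENat.natCast_toNat (SimpleGraph.egirth_eq_top.not.2 hcycle)]
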